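/- Fix n ≥ 1, ε ≥ 0, and δ ≥ 0. If a randomized algorithm B : {0,1}^n → PMF({0,1}^n) is (ε,δ)-differentially private with respect to Hamming-neighboring inputs, then there exists x ∈ {0,1}^n such that the expected Hamming distance satisfies E_{y ← B(x)}[d_H(y, x)] ≥ n · (1 − δ) / (1 + e^ε). -/

import Mathlib

/-!
For each coordinate `i`, let `q_i(x) = Pr[B(x)_i ≠ x_i]` and let `x'` be `x` with bit `i` flipped.
Since `B(x')_i = x_i` holds exactly when `B(x')_i ≠ x'_i`, privacy applied to the event
`{y | y_i = x_i}` gives `1 - q_i(x) ≤ e^ε q_i(x') + δ`. Flipping bit `i` is an involution, so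
averaging over all `x` yields `1 - δ ≤ (1 + e^ε) · avg_x q_i(x)`. The expected Hamming distance is
`∑ i, q_i(x)`, hence its average over `x` is at least `n (1 - δ) / (1 + e^ε)`, and some `x` is at
least as large as the average.
-/

open scoped ENNReal NNReal

/-- The probability that a sample from `p` lands in the set `S`. -/
noncomputable def prob {Y : Type*} (p : PMF Y) (S : Set Y) : ℝ≥0∞ :=
  p.toOuterMeasure S

/-- `A` is `(ε,δ)`-differentially private with respect to the neighboring relation `N`. -/
def IsDP {X Y : Type*} (N : X → X → Prop) (A : X → PMF Y) (ε δ : ℝ) : Prop :=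
  ∀ x x', N x x' → ∀ S : Set Y,
    prob (A x) S ≤ ENNReal.ofReal (Real.exp ε) * prob (A x') S + ENNReal.ofReal δ

/-- The expected value of `f` under the distribution `p` (finite output space). -/
noncomputable def expVal {Y : Type*} [Fintype Y] (p : PMF Y) (f : Y → ℝ) : ℝ :=
  ∑ y, (p y).toReal * f y

/-- Two bit strings are Hamming-neighboring if they differ in exactly one coordinate. -/
def HammingNeighbor {n : ℕ} (x y : Fin n → Bool) : Prop :=
  hammingDist x y = 1

/-- The probability that bit `i` of a sample from `p` differs from bit `i` of `x`. -/
noncomputable def errProb {n : ℕ} (p : PMF (Fin n → Bool)) (x : Fin n → Bool) (i : Fin n) : ℝ :=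
  ∑ y, (p y).toReal * (if y i ≠ x i then 1 else 0)

/-- The input `x` with bit `i` flipped. -/
def flipBit {n : ℕ} (i : Fin n) (x : Fin n → Bool) : Fin n → Bool :=
  Function.update x i (!x i)

lemma flipBit_involutive {n : ℕ} (i : Fin n) : Function.Involutive (flipBit i) := by
  intro x
  simp [flipBit]

lemma hammingNeighbor_flipBit {n : ℕ} (i : Fin n) (x : Fin n → Bool) :
    HammingNeighbor x (flipBit i x) := by
  rw [HammingNeighbor, hammingDist, Finset.card_eq_one]
  refine ⟨i, Finset.ext fun j => ?_⟩
  rw [Finset.mem_filter, Finset.mem_singleton]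
  by_cases hj : j = i
  · subst hj
    simp [flipBit]
  · simp [flipBit, hj]

lemma prob_ne_top {Y : Type*} (p : PMF Y) (S : Set Y) : prob p S ≠ ⊤ :=
  ne_top_of_le_ne_top ENNReal.one_ne_top <|
    (p.toOuterMeasure.mono (Set.subset_univ S)).trans
      ((p.toOuterMeasure_apply_eq_one_iff Set.univ).2 (Set.subset_univ _)).le

lemma toReal_prob {Y : Type*} [Fintype Y] (p : PMF Y) (P : Y → Prop) [DecidablePred P] :
    (prob p {y | P y}).toReal = ∑ y, (p y).toReal * (if P y then 1 else 0) := by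
  rw [prob, PMF.toOuterMeasure_apply_fintype, ENNReal.toReal_sum]
  · refine Finset.sum_congr rfl fun y _ => ?_
    by_cases h : P y <;> simp [h]
  · intro y _
    by_cases h : P y <;> simp [h, p.apply_ne_top]

lemma sum_toReal_pmf {Y : Type*} [Fintype Y] (p : PMF Y) : ∑ y, (p y).toReal = 1 := by
  rw [← ENNReal.toReal_sum fun y _ => p.apply_ne_top y, ← tsum_fintype (L := .unconditional _),
    p.tsum_coe, ENNReal.toReal_one]

/-- Linearity of expectation for the Hamming distance. -/
lemma expVal_hammingDist {n : ℕ} (p : PMF (Fin n → Bool)) (x : Fin n → Bool) :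
    expVal p (fun y => (hammingDist y x : ℝ)) = ∑ i, errProb p x i := by
  simp only [expVal, errProb]
  rw [Finset.sum_comm]
  refine Finset.sum_congr rfl fun y _ => ?_
  rw [← Finset.mul_sum, Finset.sum_boole]
  rfl

/-- Privacy applied to the event that bit `i` of the output agrees with bit `i` of `x`. -/
lemma one_sub_errProb_le {n : ℕ} {ε δ : ℝ} (hδ : 0 ≤ δ)
    {B : (Fin n → Bool) → PMF (Fin n → Bool)}
    (hDP : IsDP (fun x y => HammingNeighbor x y) B ε δ) (i : Fin n) (x : Fin n → Bool) :
    1 - errProb (B x) x i ≤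
      Real.exp ε * errProb (B (flipBit i x)) (flipBit i x) i + δ := by
  have h := hDP x (flipBit i x) (hammingNeighbor_flipBit i x) {y | y i = x i}
  have h2 := ENNReal.toReal_mono (by finiteness [prob_ne_top (B (flipBit i x)) {y | y i = x i}]) h
  rw [ENNReal.toReal_add (by finiteness [prob_ne_top (B (flipBit i x)) {y | y i = x i}])
    ENNReal.ofReal_ne_top, ENNReal.toReal_mul, ENNReal.toReal_ofReal (Real.exp_pos ε).le,
    ENNReal.toReal_ofReal hδ, toReal_prob, toReal_prob] at h2
  have h3 : 1 - errProb (B x) x i = ∑ y, (B x y).toReal * (if y i = x i then 1 else 0) := by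
    refine (congrArg (· - errProb (B x) x i) (sum_toReal_pmf (B x)).symm).trans ?_
    simp only [errProb]
    rw [← Finset.sum_sub_distrib]
    refine Finset.sum_congr rfl fun y _ => ?_
    by_cases hy : y i = x i <;> simp [hy]
  have h4 : errProb (B (flipBit i x)) (flipBit i x) i =
      ∑ y, (B (flipBit i x) y).toReal * (if y i = x i then 1 else 0) := by
    refine Finset.sum_congr rfl fun y _ => ?_
    cases hy : y i <;> cases hx : x i <;> simp [flipBit, hx]
  rw [h3, h4]
  exact h2

/-- Averaged over all inputs, bit `i` is wrong with probability at least `(1 - δ) / (1 + e^ε)`. -/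
lemma sum_errProb_ge {n : ℕ} {ε δ : ℝ} (hδ : 0 ≤ δ)
    {B : (Fin n → Bool) → PMF (Fin n → Bool)}
    (hDP : IsDP (fun x y => HammingNeighbor x y) B ε δ) (i : Fin n) :
    ∑ _x : Fin n → Bool, (1 - δ) / (1 + Real.exp ε) ≤ ∑ x, errProb (B x) x i := by
  have h := Finset.sum_le_sum fun x (_ : x ∈ Finset.univ) => one_sub_errProb_le hδ hDP i x
  have hflip : ∑ x, errProb (B (flipBit i x)) (flipBit i x) i = ∑ x, errProb (B x) x i :=
    Equiv.sum_comp (flipBit_involutive i).toPerm fun x => errProb (B x) x i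
  rw [Finset.sum_sub_distrib, Finset.sum_add_distrib, ← Finset.mul_sum, hflip] at h
  rw [← Finset.sum_div, div_le_iff₀ (by positivity), Finset.sum_sub_distrib]
  linarith

/-- **Limits of reidentification, whole string.**  If `B : {0,1}^n → PMF({0,1}^n)` is
`(ε,δ)`-differentially private with respect to Hamming neighbors, then for some input `x`
the expected Hamming distance `E_{y ← B(x)}[d_H(y,x)]` is at least `n(1-δ)/(1+e^ε)`. -/
theorem reidentification_hamming (n : ℕ) (hn : 1 ≤ n) (ε δ : ℝ) (hε : 0 ≤ ε) (hδ : 0 ≤ δ)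
    (B : (Fin n → Bool) → PMF (Fin n → Bool))
    (hDP : IsDP (fun x y => HammingNeighbor x y) B ε δ) :
    ∃ x : Fin n → Bool,
      (n : ℝ) * (1 - δ) / (1 + Real.exp ε) ≤
        expVal (B x) (fun y => (hammingDist y x : ℝ)) := by
  have h : ∑ _x : Fin n → Bool, (n : ℝ) * (1 - δ) / (1 + Real.exp ε) ≤
      ∑ x, expVal (B x) (fun y => (hammingDist y x : ℝ)) := by
    simp only [expVal_hammingDist]
    rw [Finset.sum_comm]
    refine le_trans (le_of_eq ?_)
      (Finset.sum_le_sum fun i (_ : i ∈ Finset.univ) => sum_errProb_ge hδ hDP i)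
    simp only [Finset.sum_const, Finset.card_univ, Fintype.card_fin, nsmul_eq_mul]
    ring
  obtain ⟨x, -, hx⟩ := Finset.exists_le_of_sum_le Finset.univ_nonempty h
  exact ⟨x, hx⟩
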